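/- arXiv:2404.00259 — 4 statements merged into one kernel-verified Lean document; each statement's English description precedes it below -/
import Mathlib

section
/- Let M be a properly infinite von Neumann algebra and let (p_k)_{k∈ℕ} be a sequence of pairwise orthogonal properly infinite projections in M with Σ_{k∈ℕ} p_k = 1, the series converging in the strong operator topology. Then the only finite projection of M belonging to WZ*({p_k}_{k∈ℕ}) is 0. -/
open ContinuousLinearMap Filter Topology

noncomputable section

namespace VNA

variable {H : Type*} [NormedAddCommGroup H] [InnerProductSpace ℂ H] [CompleteSpace H]

/-- A projection (orthogonal projection): idempotent and self-adjoint. -/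
def IsProjection (p : H →L[ℂ] H) : Prop := p * p = p ∧ star p = p

/-- Murray–von Neumann equivalence of `p` and `q` relative to `M`. -/
def MvNE (M : VonNeumannAlgebra H) (p q : H →L[ℂ] H) : Prop :=
  ∃ v ∈ M, star v * v = p ∧ v * star v = q

/-- `p` is a finite projection of `M`; for projections, `q ≤ p` is the range
containment `p * q = q`. -/
def IsFiniteProjection (M : VonNeumannAlgebra H) (p : H →L[ℂ] H) : Prop :=
  p ∈ M ∧ IsProjection p ∧
    ∀ q, q ∈ M → IsProjection q → p * q = q → MvNE M q p → q = p

def IsInfiniteProjection (M : VonNeumannAlgebra H) (p : H →L[ℂ] H) : Prop :=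
  p ∈ M ∧ IsProjection p ∧ ¬ IsFiniteProjection M p

/-- The centre `Z(M) = M ∩ M'` as a set. -/
def centerSet (M : VonNeumannAlgebra H) : Set (H →L[ℂ] H) :=
  {z | z ∈ M ∧ ∀ y ∈ M, z * y = y * z}

def IsCentralProjection (M : VonNeumannAlgebra H) (z : H →L[ℂ] H) : Prop :=
  IsProjection z ∧ z ∈ centerSet M

def IsProperlyInfiniteProjection (M : VonNeumannAlgebra H) (p : H →L[ℂ] H) : Prop :=
  p ∈ M ∧ IsProjection p ∧
    ∀ z, IsCentralProjection M z → z * p ≠ 0 → IsInfiniteProjection M (z * p)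

def ProperlyInfinite (M : VonNeumannAlgebra H) : Prop :=
  IsProperlyInfiniteProjection M 1

/-- `M` is σ-finite: every family of pairwise orthogonal nonzero projections in `M`
is countable. -/
def SigmaFinite (M : VonNeumannAlgebra H) : Prop :=
  ∀ S : Set (H →L[ℂ] H), (∀ p ∈ S, p ∈ M ∧ IsProjection p ∧ p ≠ 0) →
    (∀ p ∈ S, ∀ q ∈ S, p ≠ q → p * q = 0) → S.Countable

/-- A faithful normal semifinite trace on `M`. -/
structure IsFNSTrace (M : VonNeumannAlgebra H) (τ : (H →L[ℂ] H) → ENNReal) : Prop where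
  map_zero : τ 0 = 0
  additive : ∀ x y : H →L[ℂ] H, x ∈ M → y ∈ M → 0 ≤ x → 0 ≤ y → τ (x + y) = τ x + τ y
  homogeneous : ∀ (c : ℝ) (x : H →L[ℂ] H), 0 ≤ c → x ∈ M → 0 ≤ x →
    τ (c • x) = ENNReal.ofReal c * τ x
  tracial : ∀ x : H →L[ℂ] H, x ∈ M → τ (star x * x) = τ (x * star x)
  faithful : ∀ x : H →L[ℂ] H, x ∈ M → 0 ≤ x → τ x = 0 → x = 0
  normal : ∀ (ι : Type*) [Preorder ι] [IsDirected ι (· ≤ ·)] [Nonempty ι]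
      (f : ι → (H →L[ℂ] H)) (x : H →L[ℂ] H),
      (∀ i, f i ∈ M) → (∀ i, 0 ≤ f i) → Monotone f → (∃ C : ℝ, ∀ i, ‖f i‖ ≤ C) →
      x ∈ M → IsLUB (Set.range f) x → τ x = ⨆ i, τ (f i)
  semifinite : ∀ x : H →L[ℂ] H, x ∈ M → 0 ≤ x → x ≠ 0 →
      ∃ y, y ∈ M ∧ 0 ≤ y ∧ y ≤ x ∧ y ≠ 0 ∧ τ y < ⊤

/-- `p` is a `τ`-finite projection of `M`. -/
def IsTauFiniteProjection (M : VonNeumannAlgebra H) (τ : (H →L[ℂ] H) → ENNReal)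
    (p : H →L[ℂ] H) : Prop :=
  p ∈ M ∧ IsProjection p ∧ τ p < ⊤

/-- `F₁⁺(M) = {x ∈ M : 0 ≤ x ≤ 1, px = x for some τ-finite projection p}`. -/
def F1plus (M : VonNeumannAlgebra H) (τ : (H →L[ℂ] H) → ENNReal) : Set (H →L[ℂ] H) :=
  {x | x ∈ M ∧ 0 ≤ x ∧ x ≤ 1 ∧ ∃ p, IsTauFiniteProjection M τ p ∧ p * x = x}

/-- `K(M,τ)`: operator-norm closure of the τ-finitely supported elements of `M`. -/
def Kideal (M : VonNeumannAlgebra H) (τ : (H →L[ℂ] H) → ENNReal) : Set (H →L[ℂ] H) :=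
  closure {x | x ∈ M ∧ ∃ p, IsTauFiniteProjection M τ p ∧ p * x = x}

/-- A commuting self-adjoint `n`-tuple in `M`. -/
def IsCommutingSelfAdjointTuple (M : VonNeumannAlgebra H) {n : ℕ}
    (α : Fin n → (H →L[ℂ] H)) : Prop :=
  (∀ j, α j ∈ M) ∧ (∀ j, star (α j) = α j) ∧ ∀ i j, α i * α j = α j * α i

/-- `‖[r,α]‖ = max_{1≤j≤n} ‖[r, α(j)]‖`. -/
def commNorm {n : ℕ} (α : Fin n → (H →L[ℂ] H)) (r : H →L[ℂ] H) : ℝ :=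
  ⨆ j, ‖r * α j - α j * r‖

/-- `WZ*(S)`: the double commutant in `B(H)` of `S ∪ Z(M)`. -/
def WZstar (M : VonNeumannAlgebra H) (S : Set (H →L[ℂ] H)) : Set (H →L[ℂ] H) :=
  Set.centralizer (Set.centralizer (S ∪ centerSet M))

/-- A diagonal operator of `M`: `d = Σ_k λ_k p_k` with pairwise orthogonal
projections `p_k ∈ M`, the series converging in the strong operator topology. -/
def IsDiagonal (M : VonNeumannAlgebra H) (d : H →L[ℂ] H) : Prop :=
  ∃ (p : ℕ → H →L[ℂ] H) (lam : ℕ → ℂ),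
    (∀ k, p k ∈ M) ∧ (∀ k, IsProjection (p k)) ∧
    (∀ k l, k ≠ l → p k * p l = 0) ∧
    ∀ ξ : H, HasSum (fun k => lam k • (p k ξ)) (d ξ)

end VNA

/- For `x` finite in `WZ*({p_k})`, the corner `p_k Z(M)' p_k` commutes with every `p_l` and with
`Z(M)`, hence with `x`. A projection `e ≤ p` in `M` commuting with `p Z(M)' p` has the form `z p`,
where `z` is the central support of `e`. Applied to `e = x p_k`, this shows that `e` is infinite
unless it vanishes; but `e ≤ x` is finite. So `x p_k = 0` for all `k`, and summing over `k` gives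
`x = 0`. -/

namespace VNA

variable {H : Type*} [NormedAddCommGroup H] [InnerProductSpace ℂ H] [CompleteSpace H]
  {M : VonNeumannAlgebra H} {e p q x y : H →L[ℂ] H}

theorem isProjection_iff_isStarProjection : IsProjection p ↔ IsStarProjection p :=
  isStarProjection_iff'.symm

theorem IsProjection.mul_eq_right_iff_mul_eq_left (hp : IsProjection p) (hq : IsProjection q) :
    p * q = q ↔ q * p = q := by
  rw [← star_inj, star_mul, hp.2, hq.2]

theorem MvNE.refl (hp : IsProjection p) (hpM : p ∈ M) : MvNE M p p :=
  ⟨p, hpM, by rw [hp.2, hp.1], by rw [hp.2, hp.1]⟩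

theorem mul_star_mul_self_of_isIdempotentElem {A : Type*} [NonUnitalNormedRing A] [StarRing A]
    [CStarRing A] {v : A} (h : IsIdempotentElem (star v * v)) : v * (star v * v) = v := by
  have expand : star (v * (star v * v) - v) * (v * (star v * v) - v) =
      (star v * v) * (star v * v) * (star v * v) - (star v * v) * (star v * v)
        - ((star v * v) * (star v * v) - star v * v) := by
    simp only [star_sub, star_mul, star_star]
    noncomm_ring
  refine sub_eq_zero.1 (CStarRing.star_mul_self_eq_zero_iff _ |>.1 ?_)
  rw [expand, h.eq, h.eq, sub_self]

theorem MvNE.add {p' q' : H →L[ℂ] H} (h : MvNE M p q) (h' : MvNE M p' q')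
    (hp : IsIdempotentElem p) (hp' : IsIdempotentElem p') (hpp' : p * p' = 0) (hqq' : q * q' = 0) :
    MvNE M (p + p') (q + q') := by
  obtain ⟨v, hvM, rfl, rfl⟩ := h
  obtain ⟨w, hwM, rfl, rfl⟩ := h'
  have hv := mul_star_mul_self_of_isIdempotentElem hp
  have hw := mul_star_mul_self_of_isIdempotentElem hp'
  have hvw : star v * w = 0 := by
    calc star v * w = star (v * (star v * v)) * (w * (star w * w)) := by rw [hv, hw]
      _ = star v * (v * star v * (w * star w)) * w := by
        simp only [star_mul, star_star, mul_assoc]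
      _ = 0 := by rw [hqq', mul_zero, zero_mul]
  have hvw' : v * star w = 0 := by
    calc v * star w = v * (star v * v) * star (w * (star w * w)) := by rw [hv, hw]
      _ = v * (star v * v * (star w * w)) * star w := by
        simp only [star_mul, star_star, mul_assoc]
      _ = 0 := by rw [hpp', mul_zero, zero_mul]
  have hwv : star w * v = 0 := by simpa using congrArg star hvw
  have hwv' : w * star v = 0 := by simpa using congrArg star hvw'
  exact ⟨v + w, add_mem hvM hwM, by simp [mul_add, add_mul, hvw, hwv],
    by simp [mul_add, add_mul, hvw', hwv']⟩

theorem IsFiniteProjection.mono (hx : IsFiniteProjection M x) (heM : e ∈ M) (he : IsProjection e)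
    (hxe : x * e = e) : IsFiniteProjection M e := by
  refine ⟨heM, he, fun q hqM hq heq hqe => ?_⟩
  obtain ⟨hxM, hxproj, hfin⟩ := hx
  have hxq : x * q = q := by rw [← heq, ← mul_assoc, hxe]
  have hex : e * x = e := (hxproj.mul_eq_right_iff_mul_eq_left he).1 hxe
  have hqx : q * x = q := (hxproj.mul_eq_right_iff_mul_eq_left hq).1 hxq
  have hqe' : q * e = q := (he.mul_eq_right_iff_mul_eq_left hq).1 heq
  have hd : IsStarProjection (x - e) :=
    (isProjection_iff_isStarProjection.1 he).sub_of_mul_eq_left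
      (isProjection_iff_isStarProjection.1 hxproj) hex
  have hdM : x - e ∈ M := sub_mem hxM heM
  have hed : e * (x - e) = 0 := by rw [mul_sub, hex, he.1, sub_self]
  have hqd : q * (x - e) = 0 := by rw [mul_sub, hqx, hqe', sub_self]
  have hequiv : MvNE M (q + (x - e)) x := by
    simpa only [add_sub_cancel] using
      hqe.add (.refl (isProjection_iff_isStarProjection.2 hd) hdM) hq.1 hd.isIdempotentElem hqd hed
  have hqd_proj : IsProjection (q + (x - e)) := isProjection_iff_isStarProjection.2
    ((isProjection_iff_isStarProjection.1 hq).add hd hqd)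
  have hle : x * (q + (x - e)) = q + (x - e) := by rw [mul_add, hxq, mul_sub, hxproj.1, hxe]
  have hfull : q + (x - e) = x := hfin _ (add_mem hqM hdM) hqd_proj hle hequiv
  rwa [← add_sub_assoc, sub_eq_iff_eq_add, add_comm x, add_left_inj] at hfull

theorem isCentralProjection_starProjection {K : Submodule ℂ H} [K.HasOrthogonalProjection]
    (hK : ∀ y ∈ Set.centralizer (centerSet M), K ∈ Module.End.invtSubmodule (y : H →ₗ[ℂ] H)) :
    IsCentralProjection M K.starProjection := by
  have hP : IsStarProjection K.starProjection := isStarProjection_starProjection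
  have hrange : K.starProjection.range = K := Submodule.range_starProjection K
  have mem_M : K.starProjection ∈ M := by
    rw [VonNeumannAlgebra.IsStarProjection.mem_iff hP, hrange]
    exact fun y hy => hK y fun m hm => VonNeumannAlgebra.mem_commutant_iff.1 hy m hm.1
  have mem_commutant : K.starProjection ∈ M.commutant := by
    rw [VonNeumannAlgebra.IsStarProjection.mem_iff hP, hrange, M.commutant_commutant]
    exact fun y hy => hK y fun m hm => hm.2 y hy
  exact ⟨isProjection_iff_isStarProjection.2 hP, mem_M,
    fun y hy => (VonNeumannAlgebra.mem_commutant_iff.1 mem_commutant y hy).symm⟩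

theorem IsCentralProjection.one_sub (hp : IsCentralProjection M p) :
    IsCentralProjection M (1 - p) :=
  ⟨isProjection_iff_isStarProjection.2 (isProjection_iff_isStarProjection.1 hp.1).one_sub,
    sub_mem (one_mem M) hp.2.1, fun y hy => by rw [sub_mul, mul_sub, hp.2.2 y hy, one_mul, mul_one]⟩

/-- The largest closed subspace of `ker e` invariant under the commutant `Z(M)'` of the centre. -/
def centralKernel (M : VonNeumannAlgebra H) (e : H →L[ℂ] H) : ClosedSubmodule ℂ H :=
  ⨅ y ∈ Set.centralizer (centerSet M), (⊥ : ClosedSubmodule ℂ H).comap (e * y)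

/-- The central support of `e`: the smallest central projection `z` of `M` with `e z = e`. It is
defined without an infimum of projections, as the complement of the projection onto
`centralKernel M e`. -/
def centralSupport (M : VonNeumannAlgebra H) (e : H →L[ℂ] H) : H →L[ℂ] H :=
  1 - (centralKernel M e).starProjection

theorem mem_centralKernel_iff {h : H} :
    h ∈ centralKernel M e ↔ ∀ y ∈ Set.centralizer (centerSet M), e (y h) = 0 := by
  simp [centralKernel]

theorem isCentralProjection_centralSupport : IsCentralProjection M (centralSupport M e) := by
  refine (isCentralProjection_starProjection fun y hy h hh => ?_).one_sub
  exact mem_centralKernel_iff.2 fun w hw =>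
    mem_centralKernel_iff.1 hh (w * y) (Set.mul_mem_centralizer hw hy)

theorem centralSupport_mul_eq_zero_iff :
    centralSupport M e * x = 0 ↔ ∀ y ∈ Set.centralizer (centerSet M), e * y * x = 0 := by
  calc centralSupport M e * x = 0
      ↔ (centralKernel M e).starProjection * x = x := by
        rw [centralSupport, sub_mul, one_mul, sub_eq_zero, eq_comm]
    _ ↔ ∀ h, x h ∈ centralKernel M e := by
        simp [ContinuousLinearMap.ext_iff, Submodule.starProjection_eq_self_iff]
    _ ↔ ∀ y ∈ Set.centralizer (centerSet M), e * y * x = 0 := by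
        simp only [mem_centralKernel_iff, ContinuousLinearMap.ext_iff]
        exact ⟨fun hx y hy h => hx h y hy, fun hx h y hy => hx y hy h⟩

theorem mul_centralSupport : e * centralSupport M e = e := by
  ext h
  have : e ((centralKernel M e).starProjection h) = 0 :=
    mem_centralKernel_iff.1 (Submodule.starProjection_apply_mem _ h) 1 Set.one_mem_centralizer
  simp [centralSupport, this]

theorem centralSupport_mul_eq_of_commute (heM : e ∈ M) (he : IsIdempotentElem e)
    (hp : IsIdempotentElem p) (hep : e * p = e) (hpe : p * e = e)
    (hcomm : ∀ y ∈ Set.centralizer (centerSet M), Commute e (p * y * p)) :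
    centralSupport M e * p = e := by
  have hself : centralSupport M e * e = e :=
    (isCentralProjection_centralSupport.2.2 e heM).trans mul_centralSupport
  have hdiff : centralSupport M e * (p - e) = 0 := by
    refine centralSupport_mul_eq_zero_iff.2 fun y hy => ?_
    have hpd : p * (p - e) = p - e := by rw [mul_sub, hp.eq, hpe]
    calc e * y * (p - e) = e * p * y * (p * (p - e)) := by rw [hep, hpd]
      _ = e * (p * y * p) * (p - e) := by simp only [mul_assoc]
      _ = p * y * p * (e * (p - e)) := by rw [(hcomm y hy).eq, mul_assoc]
      _ = 0 := by rw [mul_sub, hep, he.eq, sub_self, mul_zero]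
  rwa [mul_sub, hself, sub_eq_zero] at hdiff

theorem IsFiniteProjection.mul_eq_zero_of_isProperlyInfiniteProjection
    (hx : IsFiniteProjection M x) (hp : IsProperlyInfiniteProjection M p)
    (hcomm : ∀ y ∈ Set.centralizer (centerSet M), Commute x (p * y * p)) : x * p = 0 := by
  obtain ⟨hpM, hpproj, hinf⟩ := hp
  have hxp : Commute x p := by simpa [hpproj.1] using hcomm 1 Set.one_mem_centralizer
  have heM : x * p ∈ M := mul_mem hx.1 hpM
  have he : IsProjection (x * p) := by
    rw [isProjection_iff_isStarProjection] at hpproj ⊢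
    exact (isProjection_iff_isStarProjection.1 hx.2.1).mul hpproj hxp
  have hfin : IsFiniteProjection M (x * p) := hx.mono heM he (by rw [← mul_assoc, hx.2.1.1])
  have hep : x * p * p = x * p := by rw [mul_assoc, hpproj.1]
  have hpe : p * (x * p) = x * p := (hpproj.mul_eq_right_iff_mul_eq_left he).2 hep
  have hcentral : centralSupport M (x * p) * p = x * p := by
    refine centralSupport_mul_eq_of_commute heM he.1 hpproj.1 hep hpe fun y hy => ?_
    have hp_corner : Commute p (p * y * p) := by
      simp only [commute_iff_eq, mul_assoc, hpproj.1]
      simp only [← mul_assoc, hpproj.1]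
    exact (hcomm y hy).mul_left hp_corner
  by_contra hne
  have hzp_inf : IsInfiniteProjection M (centralSupport M (x * p) * p) :=
    hinf _ isCentralProjection_centralSupport (by rwa [hcentral])
  exact hzp_inf.2.2 (by rwa [hcentral])

theorem corner_mem_centralizer {ι : Type*} {p : ι → H →L[ℂ] H} (hpM : ∀ k, p k ∈ M)
    (hp : ∀ k, IsIdempotentElem (p k)) (horth : ∀ k l, k ≠ l → p k * p l = 0)
    (hy : y ∈ Set.centralizer (centerSet M)) (k : ι) :
    p k * y * p k ∈ Set.centralizer (Set.range p ∪ centerSet M) := by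
  rintro m (⟨l, rfl⟩ | hm)
  · rcases eq_or_ne k l with rfl | hkl
    · rw [mul_assoc _ (p k) (p k), ← mul_assoc, ← mul_assoc, (hp k).eq]
    · rw [mul_assoc _ (p k) (p l), ← mul_assoc, ← mul_assoc, horth k l hkl, horth l k hkl.symm,
        zero_mul, zero_mul, mul_zero]
  · have hmp : Commute m (p k) := hm.2 _ (hpM k)
    exact (hmp.mul_right (hy m hm)).mul_right hmp

end VNA

open VNA in
theorem statement_8_general {H ι : Type*} [NormedAddCommGroup H] [InnerProductSpace ℂ H]
    [CompleteSpace H] (M : VonNeumannAlgebra H) (p : ι → H →L[ℂ] H)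
    (hp : ∀ k, IsProperlyInfiniteProjection M (p k))
    (horth : ∀ k l, k ≠ l → p k * p l = 0)
    (hsum : ∀ ξ : H, HasSum (fun k => p k ξ) ξ) :
    ∀ x ∈ WZstar M (Set.range p), IsFiniteProjection M x → x = 0 := by
  intro x hx hfin
  have hxp (k : ι) : x * p k = 0 :=
    hfin.mul_eq_zero_of_isProperlyInfiniteProjection (hp k) fun _ hy => .symm <|
      hx _ (corner_mem_centralizer (fun k => (hp k).1) (fun k => (hp k).2.1.1) horth hy k)
  ext ξ
  have hterm (k : ι) : x (p k ξ) = 0 := DFunLike.congr_fun (hxp k) ξ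
  have hsum_zero : HasSum (fun _ : ι => (0 : H)) (x ξ) := by
    simpa only [hterm] using x.hasSum (hsum ξ)
  exact hsum_zero.unique hasSum_zero

open VNA in
/-- If `(p_k)` are pairwise orthogonal properly infinite projections with
`Σ p_k = 1` strongly, then the only finite projection of `M` in `WZ*({p_k})` is `0`. -/
theorem statement_8 {H : Type*} [NormedAddCommGroup H] [InnerProductSpace ℂ H]
    [CompleteSpace H] (M : VonNeumannAlgebra H) (hM : ProperlyInfinite M)
    (p : ℕ → (H →L[ℂ] H))
    (hp : ∀ k, IsProperlyInfiniteProjection M (p k))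
    (horth : ∀ k l, k ≠ l → p k * p l = 0)
    (hsum : ∀ ξ : H, HasSum (fun k => p k ξ) ξ) :
    ∀ x ∈ WZstar M (Set.range p), IsFiniteProjection M x → x = 0 :=
  statement_8_general M p hp horth hsum
end
end

section
/- Let X be a totally disconnected compact metrizable space, Y a Hausdorff topological space, and π : X → Y a continuous surjection. There exists a sequence (π_k)_{k∈ℕ} of Borel measurable maps π_k : Y → X such that: (i) π ∘ π_k = id_Y for every k; (ii) every open subset A ⊆ X satisfies A ⊆ ⋃_{k∈ℕ} (π_k ∘ π)⁻¹(A); (iii) for every continuous function f : X → ℝ with f ≥ 0 one has sup_{k∈ℕ} f(π_k(π(x))) ≥ f(x) for every x ∈ X. -/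
/-!
A continuous surjection from a compact subset of `ℝ` onto a Hausdorff space has a Borel section:
choose the least point of each fibre. The resulting section is lower semicontinuous, because its
sublevel sets are the images of the closed sublevel sets of the domain. Since every nonempty compact
metrizable space is a continuous image of the Cantor set, every continuous surjection from a compact
metrizable space onto a Hausdorff space has a Borel section. Modifying it over the closed set
`π '' K` by a section of `π` restricted to a closed set `K` yields a Borel section whose value lies
in `K` over every point of `π '' K`. Letting `K` run through the closures of a countable basis gives
sections whose values are dense in every fibre, and the sup inequality follows by continuity.
-/

open Set Function TopologicalSpace

section FiberwiseMin

variable {X Y α : Type*} [TopologicalSpace X] [TopologicalSpace Y] [LinearOrder α]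
  {π : X → Y} {f : X → α}

theorem lowerSemicontinuous_comp_of_fiberwise_min {s : Y → X} (hπ : IsClosedMap π)
    (hf : LowerSemicontinuous f) (hs : RightInverse s π) (hmin : ∀ x, f (s (π x)) ≤ f x) :
    LowerSemicontinuous (f ∘ s) := by
  refine lowerSemicontinuous_iff_isClosed_preimage.2 fun a ↦ ?_
  have preimage_eq_image : f ∘ s ⁻¹' Iic a = π '' (f ⁻¹' Iic a) := by
    ext y
    constructor
    · exact fun hy ↦ ⟨s y, hy, hs y⟩
    · rintro ⟨x, hx, rfl⟩
      exact (hmin x).trans hx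
  exact preimage_eq_image ▸ hπ _ (hf.isClosed_preimage a)

theorem exists_rightInverse_fiberwise_min [CompactSpace X] [T1Space Y] (hπ : Continuous π)
    (hsurj : Surjective π) (hf : LowerSemicontinuous f) :
    ∃ s : Y → X, RightInverse s π ∧ ∀ x, f (s (π x)) ≤ f x := by
  have exists_min (y : Y) : ∃ x ∈ π ⁻¹' {y}, IsMinOn f (π ⁻¹' {y}) x :=
    (hf.lowerSemicontinuousOn _).exists_isMinOn (hsurj y)
      (isClosed_singleton.preimage hπ).isCompact
  choose s hs hmin using exists_min
  exact ⟨s, hs, fun x ↦ hmin (π x) rfl⟩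

end FiberwiseMin

theorem exists_cantorSet_continuous_surjective (X : Type*) [TopologicalSpace X] [CompactSpace X]
    [MetrizableSpace X] [Nonempty X] : ∃ q : cantorSet → X, Continuous q ∧ Surjective q := by
  let _ := metrizableSpaceMetric X
  obtain ⟨q, hq, hq_surj⟩ := exists_nat_bool_continuous_surjective_of_compact X
  let e := cantorSetHomeomorphNatToBool
  exact ⟨q ∘ e, hq.comp e.continuous, hq_surj.comp e.surjective⟩

section BorelSection

variable {X Y : Type*} [TopologicalSpace X] [CompactSpace X] [MeasurableSpace X] [BorelSpace X]
  [TopologicalSpace Y] [T2Space Y] [MeasurableSpace Y] [BorelSpace Y] {π : X → Y}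

theorem exists_measurable_rightInverse_of_injective {α : Type*} [LinearOrder α]
    [TopologicalSpace α] [OrderTopology α] [SecondCountableTopology α] {f : X → α}
    (hf : Continuous f) (hinj : Injective f) (hπ : Continuous π) (hsurj : Surjective π) :
    ∃ s : Y → X, Measurable s ∧ RightInverse s π := by
  borelize α
  obtain ⟨s, hs, hmin⟩ := exists_rightInverse_fiberwise_min hπ hsurj hf.lowerSemicontinuous
  have f_embedding : MeasurableEmbedding f := (hf.isClosedEmbedding hinj).measurableEmbedding
  have comp_lsc : LowerSemicontinuous (f ∘ s) :=
    lowerSemicontinuous_comp_of_fiberwise_min hπ.isClosedMap hf.lowerSemicontinuous hs hmin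
  exact ⟨s, f_embedding.measurable_comp_iff.1 comp_lsc.measurable, hs⟩

variable [MetrizableSpace X]

theorem exists_measurable_rightInverse (hπ : Continuous π) (hsurj : Surjective π) :
    ∃ s : Y → X, Measurable s ∧ RightInverse s π := by
  rcases isEmpty_or_nonempty X with _ | _
  · have : IsEmpty Y := hsurj.isEmpty
    exact ⟨isEmptyElim, measurable_of_empty _, isEmptyElim⟩
  obtain ⟨q, hq, hq_surj⟩ := exists_cantorSet_continuous_surjective X
  have : CompactSpace cantorSet := isCompact_iff_compactSpace.1 isCompact_cantorSet
  obtain ⟨s, hs, hs_inv⟩ := exists_measurable_rightInverse_of_injective continuous_subtype_val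
    Subtype.val_injective (hπ.comp hq) (hsurj.comp hq_surj)
  exact ⟨q ∘ s, hq.measurable.comp hs, hs_inv⟩

theorem exists_measurable_rightInverse_mem_of_isClosed {K : Set X} (hK : IsClosed K)
    (hπ : Continuous π) (hsurj : Surjective π) :
    ∃ s : Y → X, Measurable s ∧ RightInverse s π ∧ ∀ x ∈ K, s (π x) ∈ K := by
  classical
  obtain ⟨s, hs, hs_inv⟩ := exists_measurable_rightInverse hπ hsurj
  have : CompactSpace K := isCompact_iff_compactSpace.1 hK.isCompact
  obtain ⟨t, ht, ht_inv⟩ := exists_measurable_rightInverse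
    (π := imageFactorization π K) ((hπ.comp continuous_subtype_val).subtype_mk _)
    imageFactorization_surjective
  have image_measurable : MeasurableSet (π '' K) := (hπ.isClosedMap K hK).measurableSet
  refine ⟨fun y ↦ if hy : y ∈ π '' K then t ⟨y, hy⟩ else s y, ?_, fun y ↦ ?_, fun x hx ↦ ?_⟩
  · exact (measurable_subtype_coe.comp ht).dite (hs.comp measurable_subtype_coe) image_measurable
  · by_cases hy : y ∈ π '' K
    · simpa only [dif_pos hy, imageFactorization] using congrArg Subtype.val (ht_inv ⟨y, hy⟩)
    · simpa only [dif_neg hy] using hs_inv y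
  · simp only [dif_pos (mem_image_of_mem π hx), Subtype.coe_prop]

theorem exists_seq_measurable_rightInverse_mem_closure_range (hπ : Continuous π)
    (hsurj : Surjective π) :
    ∃ s : ℕ → Y → X, (∀ k, Measurable (s k)) ∧ (∀ k, RightInverse (s k) π) ∧
      ∀ x, x ∈ closure (range fun k ↦ s k (π x)) := by
  let _ := metrizableSpaceMetric X
  obtain ⟨B, hB⟩ := exists_seq_basis X
  choose s hs hs_inv hs_mem using fun k ↦
    exists_measurable_rightInverse_mem_of_isClosed (isClosed_closure (s := B k)) hπ hsurj
  refine ⟨s, hs, hs_inv, fun x ↦ mem_closure_iff_nhds.2 fun U hU ↦ ?_⟩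
  obtain ⟨_, ⟨k, rfl⟩, hxk, hkU⟩ := hB.exists_closure_subset hU
  exact ⟨s k (π x), hkU (hs_mem k x (subset_closure hxk)), k, rfl⟩

end BorelSection

theorem le_ciSup_of_mem_closure_range {X ι α : Type*} [TopologicalSpace X]
    [ConditionallyCompleteLattice α] [TopologicalSpace α] [ClosedIicTopology α] {f : X → α}
    {u : ι → X} {x : X} (hf : Continuous f) (hbdd : BddAbove (range fun i ↦ f (u i)))
    (hx : x ∈ closure (range u)) : f x ≤ ⨆ i, f (u i) :=
  closure_minimal (t := f ⁻¹' Iic (⨆ i, f (u i))) (range_subset_iff.2 (le_ciSup hbdd))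
    (isClosed_Iic.preimage hf) hx

theorem statement_10_general (X Y : Type*) [TopologicalSpace X] [CompactSpace X]
    [MetrizableSpace X] [MeasurableSpace X] [BorelSpace X]
    [TopologicalSpace Y] [T2Space Y] [MeasurableSpace Y] [BorelSpace Y]
    (π : X → Y) (hπc : Continuous π) (hπs : Surjective π) :
    ∃ πk : ℕ → Y → X,
      (∀ k, Measurable (πk k)) ∧
      (∀ k, π ∘ πk k = id) ∧
      (∀ A : Set X, IsOpen A → A ⊆ ⋃ k, (πk k ∘ π) ⁻¹' A) ∧
      (∀ f : X → ℝ, Continuous f → ∀ x, f x ≤ ⨆ k, f (πk k (π x))) := by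
  obtain ⟨s, hs, hs_inv, hs_dense⟩ :=
    exists_seq_measurable_rightInverse_mem_closure_range hπc hπs
  refine ⟨s, hs, fun k ↦ (hs_inv k).comp_eq_id, fun A hA x hx ↦ ?_, fun f hf x ↦ ?_⟩
  · obtain ⟨_, hkA, k, rfl⟩ := mem_closure_iff.1 (hs_dense x) A hA hx
    exact mem_iUnion_of_mem k hkA
  · have bdd : BddAbove (range fun k ↦ f (s k (π x))) :=
      (isCompact_range hf).bddAbove.mono (range_comp_subset_range (fun k ↦ s k (π x)) f)
    exact le_ciSup_of_mem_closure_range hf bdd (hs_dense x)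

/-- Borel sections of a continuous surjection from a totally disconnected
compact metrizable space onto a Hausdorff space, with covering and pointwise-sup properties. -/
theorem statement_10 (X Y : Type*) [TopologicalSpace X] [CompactSpace X]
    [TopologicalSpace.MetrizableSpace X] [TotallyDisconnectedSpace X]
    [MeasurableSpace X] [BorelSpace X]
    [TopologicalSpace Y] [T2Space Y] [MeasurableSpace Y] [BorelSpace Y]
    (π : X → Y) (hπc : Continuous π) (hπs : Function.Surjective π) :
    ∃ πk : ℕ → Y → X,
      (∀ k, Measurable (πk k)) ∧
      (∀ k, π ∘ πk k = id) ∧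
      (∀ A : Set X, IsOpen A → A ⊆ ⋃ k, (πk k ∘ π) ⁻¹' A) ∧
      (∀ f : X → ℝ, Continuous f → (∀ x, 0 ≤ f x) →
        ∀ x, f x ≤ ⨆ k, f (πk k (π x))) := by
  obtain ⟨s, hs, hs_inv, hs_open, hs_sup⟩ := statement_10_general X Y π hπc hπs
  exact ⟨s, hs, hs_inv, hs_open, fun f hf _ ↦ hs_sup f hf⟩
end

section
/- Let X be a totally disconnected compact metrizable space, Y a Hausdorff topological space, π : X → Y a continuous surjection, and (π_k)_{k∈ℕ} a sequence of Borel measurable maps π_k : Y → X such that π ∘ π_k = id_Y for every k and every open A ⊆ X satisfies A ⊆ ⋃_{k∈ℕ} (π_k ∘ π)⁻¹(A). Let ν be a Borel measure on X with ν(U) > 0 for every nonempty open U ⊆ X, and let ν∘π⁻¹ denote the pushforward measure B ↦ ν(π⁻¹(B)) on the Borel sets of Y. If f : X → ℝ is continuous with f ≥ 0 and, for every k ∈ ℕ, the set {y ∈ Y : f(π_k(y)) ≠ 0} is (ν∘π⁻¹)-null, then f = 0. -/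
open MeasureTheory

open Function

theorem measure_eq_zero_of_subset_iUnion_preimage {X Y ι : Type*} [Countable ι]
    [MeasurableSpace X] [MeasurableSpace Y] {ν : Measure X} {π : X → Y} (hπ : AEMeasurable π ν)
    {A : Set X} {B : ι → Set Y} (hAB : A ⊆ ⋃ k, π ⁻¹' B k) (hB : ∀ k, ν.map π (B k) = 0) :
    ν A = 0 :=
  measure_mono_null hAB <| measure_iUnion_null fun k =>
    Measure.preimage_null_of_map_null hπ (hB k)

theorem statement_11_general {X Y E ι : Type*} [Countable ι] [TopologicalSpace X]
    [MeasurableSpace X] [MeasurableSpace Y] [TopologicalSpace E] [T1Space E] [Zero E]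
    {ν : Measure X} [ν.IsOpenPosMeasure] {π : X → Y} (hπ : AEMeasurable π ν)
    {σ : ι → Y → X} (hcover : ∀ A : Set X, IsOpen A → A ⊆ ⋃ k, (σ k ∘ π) ⁻¹' A)
    {f : X → E} (hf : Continuous f) (hnull : ∀ k, ν.map π {y | f (σ k y) ≠ 0} = 0) :
    f = 0 := by
  have support_open : IsOpen (support f) := hf.isOpen_support
  have support_null : ν (support f) = 0 :=
    measure_eq_zero_of_subset_iUnion_preimage hπ (hcover _ support_open) hnull
  exact support_eq_empty_iff.mp ((support_open.measure_eq_zero_iff ν).mp support_null)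

/-- If `ν` is a Borel measure positive on nonempty open sets, `(π_k)` are
Borel sections of `π` with the covering property, and `f ≥ 0` is continuous with each set
`{f ∘ π_k ≠ 0}` null for the pushforward measure `ν ∘ π⁻¹`, then `f = 0`. -/
theorem statement_11 (X Y : Type*) [TopologicalSpace X] [CompactSpace X]
    [TopologicalSpace.MetrizableSpace X] [TotallyDisconnectedSpace X]
    [MeasurableSpace X] [BorelSpace X]
    [TopologicalSpace Y] [T2Space Y] [MeasurableSpace Y] [BorelSpace Y]
    (π : X → Y) (hπc : Continuous π) (hπs : Function.Surjective π)
    (πk : ℕ → Y → X) (hπk : ∀ k, Measurable (πk k))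
    (hsect : ∀ k, π ∘ πk k = id)
    (hcover : ∀ A : Set X, IsOpen A → A ⊆ ⋃ k, (πk k ∘ π) ⁻¹' A)
    (ν : Measure X)
    (hν : ∀ U : Set X, IsOpen U → U.Nonempty → 0 < ν U)
    (f : X → ℝ) (hf : Continuous f) (hf0 : ∀ x, 0 ≤ f x)
    (hnull : ∀ k, Measure.map π ν {y | f (πk k y) ≠ 0} = 0) :
    f = 0 := by
  have : ν.IsOpenPosMeasure := ⟨fun U hU hne => (hν U hU hne).ne'⟩
  exact statement_11_general hπc.aemeasurable hcover hf hnull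
end

section
/- Let M be a properly infinite σ-finite von Neumann algebra with a faithful normal semifinite trace τ, and let α ∈ M^n (n ≥ 1) be a commuting self-adjoint n-tuple such that the only finite projection of M belonging to WZ*(α) is 0. Then for every ε > 0 there exists a diagonal n-tuple β ∈ M^n such that ‖β(j) − α(j)‖ ≤ ε for every 1 ≤ j ≤ n and the only finite projection of M belonging to WZ*(β) is 0. -/
open ContinuousLinearMap Filter Topology

noncomputable section

/-!
The tuple is approximated inside the von Neumann algebra it generates, so that no new finite
projection can enter `WZ*`. Each `α j` is cut by its spectral projections into finitely many pieces
on which it is nearly scalar: the projection `e` onto `ker (a - c)⁺` satisfies `a e ≤ c e` and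
`c (1 - e) ≤ a (1 - e)`, so the differences of consecutive `e` along a mesh of width `ε` are
orthogonal projections adding up to `1`, and `a` lies between `c` and `c + ε` on each of them.
Since every `e` is in `{α j}''`, the resulting diagonal operators commute, belong to `M`, and
satisfy `WZ*(β) ⊆ WZ*(α)`.
-/

namespace VNA

section Operators

variable {𝕜 E : Type*} [RCLike 𝕜] [NormedAddCommGroup E] [InnerProductSpace 𝕜 E] [CompleteSpace E]

theorem commute_starProjection_ker {x T : E →L[𝕜] E} (hx : IsSelfAdjoint x) (h : Commute x T) :
    Commute x.ker.starProjection T := by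
  have ker_mem {S : E →L[𝕜] E} (hS : Commute x S) :
      x.ker ∈ Module.End.invtSubmodule (S : E →ₗ[𝕜] E) := fun ξ hξ ↦ by
    have hxξ : x ξ = 0 := hξ
    have hxSξ : x (S ξ) = S (x ξ) := congr($hS ξ)
    simpa [hxξ] using hxSξ
  have h_star : Commute x (star T) := by simpa only [hx.star_eq] using h.star_star
  rw [ContinuousLinearMap.IsIdempotentElem.commute_iff x.ker.isIdempotentElem_starProjection,
    Submodule.range_starProjection, Submodule.ker_starProjection]
  exact ⟨ker_mem h, orthogonal_mem_invtSubmodule (ker_mem h_star)⟩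

theorem mul_starProjection_ker (x : E →L[𝕜] E) : x * x.ker.starProjection = 0 := by
  ext ξ
  exact x.ker.starProjection_apply_mem ξ

theorem starProjection_ker_mul_eq_self {x y : E →L[𝕜] E} (h : x * y = 0) :
    x.ker.starProjection * y = y := by
  ext ξ
  exact Submodule.starProjection_eq_self_iff.2 congr($h ξ)

end Operators

theorem eq_zero_of_smul_le_smul {R A : Type*} [Ring R] [PartialOrder R] [IsOrderedRing R]
    [AddCommGroup A] [PartialOrder A] [IsOrderedAddMonoid A] [Module R A]
    [IsStrictOrderedModule R A] {x : A} {c d : R} (hx : 0 ≤ x) (hcd : c < d) (h : d • x ≤ c • x) :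
    x = 0 := by
  by_contra hne
  exact (smul_lt_smul_of_pos_right hcd (hx.lt_of_ne' hne)).not_ge h

theorem pairwise_sub_mul_sub_eq_zero {A : Type*} [NonUnitalCStarAlgebra A] [PartialOrder A]
    [StarOrderedRing A] {e : ℕ → A} (he : ∀ k, IsStarProjection (e k)) (hmono : Monotone e) :
    Pairwise fun k l ↦ (e (k + 1) - e k) * (e (l + 1) - e l) = 0 := by
  have hleft {i j : ℕ} (hij : i ≤ j) : e i * e j = e i :=
    ((he i).le_iff_mul_eq_left (he j)).1 (hmono hij)
  have hright {i j : ℕ} (hij : i ≤ j) : e j * e i = e i :=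
    ((he i).le_iff_mul_eq_right (he j)).1 (hmono hij)
  intro k l hkl
  simp only [mul_sub, sub_mul]
  rcases hkl.lt_or_gt with h | h
  · rw [hleft (by omega : k + 1 ≤ l + 1), hleft (by omega : k ≤ l + 1),
      hleft (by omega : k + 1 ≤ l), hleft h.le, sub_self]
  · rw [hright (by omega : l + 1 ≤ k + 1), hright (by omega : l + 1 ≤ k),
      hright (by omega : l ≤ k + 1), hright h.le]
    simp only [sub_self]

theorem norm_sum_smul_sub_le {A ι : Type*} [CStarAlgebra A] [PartialOrder A]
    [StarOrderedRing A] {s : Finset ι} {q : ι → A} {a : A} {c : ι → ℝ} {δ : ℝ} (hδ : 0 ≤ δ)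
    (hsum : ∑ i ∈ s, q i = 1) (hlower : ∀ i ∈ s, c i • q i ≤ a * q i)
    (hupper : ∀ i ∈ s, a * q i ≤ (c i + δ) • q i) :
    ‖∑ i ∈ s, c i • q i - a‖ ≤ δ := by
  have ha : a = ∑ i ∈ s, a * q i := by rw [← Finset.mul_sum, hsum, mul_one]
  have hnonneg : 0 ≤ a - ∑ i ∈ s, c i • q i := by
    rw [sub_nonneg]
    exact (Finset.sum_le_sum hlower).trans_eq ha.symm
  have hle : a - ∑ i ∈ s, c i • q i ≤ algebraMap ℝ A δ := by
    rw [sub_le_iff_le_add']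
    calc a = ∑ i ∈ s, a * q i := ha
      _ ≤ ∑ i ∈ s, (c i + δ) • q i := Finset.sum_le_sum hupper
      _ = ∑ i ∈ s, c i • q i + algebraMap ℝ A δ := by
        simp only [add_smul, Finset.sum_add_distrib, ← Finset.smul_sum, hsum,
          Algebra.algebraMap_eq_smul_one]
  rw [norm_sub_rev]
  exact (CStarAlgebra.norm_le_iff_le_algebraMap _ hδ hnonneg).2 hle

variable {H : Type*} [NormedAddCommGroup H] [InnerProductSpace ℂ H] [CompleteSpace H]

section SpectralProjection

variable {a x T : H →L[ℂ] H} {c r : ℝ}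

/-- The spectral projection of a self-adjoint operator `a` for `(-∞, c]`. Mathlib has no Borel
functional calculus, so it is realised as the orthogonal projection onto the kernel of `(a - c)⁺`;
when `a` is not self-adjoint it is the junk value `1`. -/
def spectralProj (a : H →L[ℂ] H) (c : ℝ) : H →L[ℂ] H :=
  ((a - algebraMap ℝ (H →L[ℂ] H) c)⁺).ker.starProjection

theorem isStarProjection_spectralProj (a : H →L[ℂ] H) (c : ℝ) :
    IsStarProjection (spectralProj a c) :=
  isStarProjection_starProjection

theorem commute_posPart_sub_algebraMap (h : Commute a T) (c : ℝ) :
    Commute (a - algebraMap ℝ (H →L[ℂ] H) c)⁺ T :=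
  (h.sub_left (Algebra.commute_algebraMap_left c T)).cfcₙ_real _

theorem commute_negPart_sub_algebraMap (h : Commute a T) (c : ℝ) :
    Commute (a - algebraMap ℝ (H →L[ℂ] H) c)⁻ T :=
  (h.sub_left (Algebra.commute_algebraMap_left c T)).cfcₙ_real _

theorem commute_spectralProj (h : Commute a T) (c : ℝ) : Commute (spectralProj a c) T :=
  commute_starProjection_ker (IsSelfAdjoint.of_nonneg (CFC.posPart_nonneg _))
    (commute_posPart_sub_algebraMap h c)

theorem posPart_mul_spectralProj (a : H →L[ℂ] H) (c : ℝ) :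
    (a - algebraMap ℝ (H →L[ℂ] H) c)⁺ * spectralProj a c = 0 :=
  mul_starProjection_ker _

theorem negPart_mul_spectralProj (a : H →L[ℂ] H) (c : ℝ) :
    (a - algebraMap ℝ (H →L[ℂ] H) c)⁻ * spectralProj a c = (a - algebraMap ℝ (H →L[ℂ] H) c)⁻ := by
  have h : spectralProj a c * _ = _ :=
    starProjection_ker_mul_eq_self (CFC.posPart_mul_negPart (a - algebraMap ℝ (H →L[ℂ] H) c))
  have h_neg : IsSelfAdjoint (a - algebraMap ℝ (H →L[ℂ] H) c)⁻ := by cfc_tac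
  simpa only [star_mul, (isStarProjection_spectralProj a c).isSelfAdjoint.star_eq,
    h_neg.star_eq] using congr(star $h)

theorem mul_le_smul_of_spectralProj_mul_eq_self (ha : IsSelfAdjoint a) (hx : 0 ≤ x)
    (hax : Commute a x) (h : spectralProj a c * x = x) : a * x ≤ c • x := by
  have h_pos : (a - algebraMap ℝ (H →L[ℂ] H) c)⁺ * x = 0 := by
    rw [← h, ← mul_assoc, posPart_mul_spectralProj, zero_mul]
  have h_mul : (a - algebraMap ℝ (H →L[ℂ] H) c) * x =
      -((a - algebraMap ℝ (H →L[ℂ] H) c)⁻ * x) := by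
    conv_lhs => rw [← CFC.posPart_sub_negPart _ (ha.sub (.algebraMap _ (.all c)))]
    rw [sub_mul, h_pos, zero_sub]
  rw [Algebra.smul_def, ← sub_nonpos, ← sub_mul, h_mul, neg_nonpos]
  exact (commute_negPart_sub_algebraMap hax c).mul_nonneg (CFC.negPart_nonneg _) hx

theorem smul_le_mul_of_spectralProj_mul_eq_zero (ha : IsSelfAdjoint a) (hx : 0 ≤ x)
    (hax : Commute a x) (h : spectralProj a c * x = 0) : c • x ≤ a * x := by
  have h_neg : (a - algebraMap ℝ (H →L[ℂ] H) c)⁻ * x = 0 := by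
    rw [← negPart_mul_spectralProj, mul_assoc, h, mul_zero]
  have h_mul : (a - algebraMap ℝ (H →L[ℂ] H) c) * x =
      (a - algebraMap ℝ (H →L[ℂ] H) c)⁺ * x := by
    conv_lhs => rw [← CFC.posPart_sub_negPart _ (ha.sub (.algebraMap _ (.all c)))]
    rw [sub_mul, h_neg, sub_zero]
  rw [Algebra.smul_def, ← sub_nonneg, ← sub_mul, h_mul]
  exact (commute_posPart_sub_algebraMap hax c).mul_nonneg (CFC.posPart_nonneg _) hx

theorem monotone_spectralProj (ha : IsSelfAdjoint a) : Monotone (spectralProj a) := by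
  intro c d hcd
  rcases hcd.eq_or_lt with rfl | hcd
  · exact le_rfl
  have hc := isStarProjection_spectralProj a c
  have hd := isStarProjection_spectralProj a d
  have h_comm (r : ℝ) : Commute a (spectralProj a r) :=
    (commute_spectralProj (Commute.refl a) r).symm
  have hcd_comm : Commute (spectralProj a c) (1 - spectralProj a d) :=
    (Commute.one_right _).sub_right (commute_spectralProj (h_comm d) c)
  have hx : 0 ≤ spectralProj a c * (1 - spectralProj a d) :=
    hcd_comm.mul_nonneg hc.nonneg hd.one_sub_nonneg
  have hax : Commute a (spectralProj a c * (1 - spectralProj a d)) :=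
    (h_comm c).mul_right ((Commute.one_right a).sub_right (h_comm d))
  have h_upper := mul_le_smul_of_spectralProj_mul_eq_self (c := c) ha hx hax <| by
    rw [← mul_assoc, hc.isIdempotentElem.eq]
  have h_lower := smul_le_mul_of_spectralProj_mul_eq_zero (c := d) ha hx hax <| by
    rw [hcd_comm.eq, ← mul_assoc, hd.mul_one_sub_self, zero_mul]
  have h_zero := eq_zero_of_smul_le_smul hx hcd (h_lower.trans h_upper)
  rw [mul_sub, mul_one, sub_eq_zero] at h_zero
  exact hc.le_of_mul_eq_left hd h_zero.symm

theorem spectralProj_eq_zero (ha : IsSelfAdjoint a) (h : algebraMap ℝ (H →L[ℂ] H) r ≤ a)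
    (hcr : c < r) : spectralProj a c = 0 := by
  have hc := isStarProjection_spectralProj a c
  have hac : Commute a (spectralProj a c) := (commute_spectralProj (Commute.refl a) c).symm
  have h_lower : r • spectralProj a c ≤ a * spectralProj a c := by
    rw [Algebra.smul_def, ← sub_nonneg, ← sub_mul]
    exact (hac.sub_left (Algebra.commute_algebraMap_left r _)).mul_nonneg (sub_nonneg.2 h) hc.nonneg
  have h_upper := mul_le_smul_of_spectralProj_mul_eq_self ha hc.nonneg hac hc.isIdempotentElem.eq
  exact eq_zero_of_smul_le_smul hc.nonneg hcr (h_lower.trans h_upper)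

theorem spectralProj_eq_one (ha : IsSelfAdjoint a) (h : a ≤ algebraMap ℝ (H →L[ℂ] H) c) :
    spectralProj a c = 1 := by
  have h_pos : (a - algebraMap ℝ (H →L[ℂ] H) c)⁺ = 0 :=
    (CFC.posPart_eq_zero_iff _ (ha.sub (.algebraMap _ (.all c)))).2 (sub_nonpos.2 h)
  rw [← mul_one (spectralProj a c)]
  exact starProjection_ker_mul_eq_self (by rw [h_pos, zero_mul])

theorem exists_spectral_partition (ha : IsSelfAdjoint a) {δ : ℝ} (hδ : 0 < δ) :
    ∃ (q : ℕ → H →L[ℂ] H) (c : ℕ → ℝ) (N : ℕ),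
      (∀ k, IsStarProjection (q k)) ∧ (Pairwise fun k l ↦ q k * q l = 0) ∧
      (∀ k, q k ∈ Set.centralizer (Set.centralizer {a})) ∧ ∑ k ∈ Finset.range N, q k = 1 ∧
      (∀ k, c k • q k ≤ a * q k) ∧ ∀ k, a * q k ≤ (c k + δ) • q k := by
  set c : ℕ → ℝ := fun k ↦ k * δ - (‖a‖ + δ)
  set e : ℕ → H →L[ℂ] H := fun k ↦ spectralProj a (c k)
  have he (k : ℕ) : IsStarProjection (e k) := isStarProjection_spectralProj a (c k)
  have hc_succ (k : ℕ) : c (k + 1) = c k + δ := by simp only [c]; push_cast; ring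
  have he_mono : Monotone e := monotone_nat_of_le_succ fun k ↦
    monotone_spectralProj ha (by linarith [hc_succ k])
  have he_comm {T : H →L[ℂ] H} (hT : Commute a T) (k : ℕ) : Commute (e (k + 1) - e k) T :=
    (commute_spectralProj hT _).sub_left (commute_spectralProj hT _)
  have hq_nonneg (k : ℕ) : 0 ≤ e (k + 1) - e k := sub_nonneg.2 (he_mono k.le_succ)
  obtain ⟨N, hN⟩ := exists_nat_ge ((2 * ‖a‖ + δ) / δ)
  have h_zero : e 0 = 0 := by
    refine spectralProj_eq_zero ha (r := -‖a‖) ?_ (by simp [c, hδ])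
    simpa only [map_neg] using ha.neg_algebraMap_norm_le_self
  have h_one : e N = 1 := by
    refine spectralProj_eq_one ha (ha.le_algebraMap_norm_self.trans (algebraMap_mono _ ?_))
    linarith [(div_le_iff₀ hδ).1 hN]
  refine ⟨fun k ↦ e (k + 1) - e k, c, N, fun k ↦ ?_, pairwise_sub_mul_sub_eq_zero he he_mono,
    fun k T hT ↦ ?_, ?_, fun k ↦ ?_, fun k ↦ ?_⟩
  · exact ((he k).le_iff_sub (he _)).1 (he_mono k.le_succ)
  · exact (he_comm (hT a rfl) k).symm
  · rw [Finset.sum_range_sub, h_one, h_zero, sub_zero]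
  · refine smul_le_mul_of_spectralProj_mul_eq_zero ha (hq_nonneg k) (he_comm rfl k).symm ?_
    rw [mul_sub, ((he k).le_iff_mul_eq_left (he _)).1 (he_mono k.le_succ),
      (he k).isIdempotentElem.eq, sub_self]
  · rw [← hc_succ]
    refine mul_le_smul_of_spectralProj_mul_eq_self ha (hq_nonneg k) (he_comm rfl k).symm ?_
    rw [mul_sub, ((he k).le_iff_mul_eq_right (he _)).1 (he_mono k.le_succ),
      (he (k + 1)).isIdempotentElem.eq]

end SpectralProjection

section Tuples

variable {M : VonNeumannAlgebra H} {a : H →L[ℂ] H}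

theorem centralizer_centralizer_subset {S : Set (H →L[ℂ] H)} (hS : S ⊆ M) :
    Set.centralizer (Set.centralizer S) ⊆ M := by
  rw [← M.centralizer_centralizer]
  exact Set.centralizer_subset (Set.centralizer_subset hS)

theorem WZstar_subset_WZstar {S T : Set (H →L[ℂ] H)} (h : S ⊆ WZstar M T) :
    WZstar M S ⊆ WZstar M T := by
  have h_union : S ∪ centerSet M ⊆ WZstar M T :=
    Set.union_subset h (Set.subset_union_right.trans Set.subset_centralizer_centralizer)
  simpa only [WZstar, Set.centralizer_centralizer_centralizer] using
    Set.centralizer_subset (Set.centralizer_subset h_union)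

theorem centralizer_centralizer_subset_WZstar {S T : Set (H →L[ℂ] H)} (h : S ⊆ T) :
    Set.centralizer (Set.centralizer S) ⊆ WZstar M T :=
  Set.centralizer_subset (Set.centralizer_subset (h.trans Set.subset_union_left))

theorem isDiagonal_sum_smul {p : ℕ → H →L[ℂ] H} (s : Finset ℕ) (lam : ℕ → ℂ)
    (hpM : ∀ k, p k ∈ M) (hp : ∀ k, IsStarProjection (p k))
    (horth : Pairwise fun k l ↦ p k * p l = 0) : IsDiagonal M (∑ k ∈ s, lam k • p k) := by
  refine ⟨p, (s : Set ℕ).indicator lam, hpM,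
    fun k ↦ ⟨(hp k).isIdempotentElem.eq, (hp k).isSelfAdjoint.star_eq⟩,
    fun k l hkl ↦ horth hkl, fun ξ ↦ ?_⟩
  have h_sum : (∑ k ∈ s, lam k • p k) ξ = ∑ k ∈ s, (s : Set ℕ).indicator lam k • p k ξ := by
    rw [sum_apply]
    refine Finset.sum_congr rfl fun k hk ↦ ?_
    rw [Set.indicator_of_mem (Finset.mem_coe.2 hk), smul_apply]
  rw [h_sum]
  refine hasSum_sum_of_ne_finset_zero fun k hk ↦ ?_
  rw [Set.indicator_of_notMem (Finset.mem_coe.not.2 hk), zero_smul]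

theorem exists_isDiagonal_norm_sub_le (haM : a ∈ M) (ha : IsSelfAdjoint a) {ε : ℝ} (hε : 0 < ε) :
    ∃ b ∈ Set.centralizer (Set.centralizer {a}), IsDiagonal M b ∧ ‖b - a‖ ≤ ε := by
  obtain ⟨q, c, N, hq, horth, hqa, hsum, hlower, hupper⟩ := exists_spectral_partition ha hε
  have hqM (k : ℕ) : q k ∈ M :=
    centralizer_centralizer_subset (Set.singleton_subset_iff.2 haM) (hqa k)
  refine ⟨∑ k ∈ Finset.range N, (c k : ℂ) • q k, ?_, ?_, ?_⟩
  · rw [← Subalgebra.coe_centralizer ℂ]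
    exact sum_mem fun k _ ↦ Subalgebra.smul_mem _ (hqa k) _
  · exact isDiagonal_sum_smul _ _ hqM hq horth
  · simp only [Complex.coe_smul]
    exact norm_sum_smul_sub_le hε.le hsum (fun k _ ↦ hlower k) (fun k _ ↦ hupper k)

end Tuples

end VNA

open VNA in
theorem statement_15_general {H : Type*} [NormedAddCommGroup H] [InnerProductSpace ℂ H]
    [CompleteSpace H] (M : VonNeumannAlgebra H) {ι : Type*} (α : ι → (H →L[ℂ] H))
    (hαM : ∀ j, α j ∈ M) (hα : ∀ j, IsSelfAdjoint (α j)) (hcomm : ∀ i j, α i * α j = α j * α i)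
    {ε : ℝ} (hε : 0 < ε) :
    ∃ β : ι → (H →L[ℂ] H),
      (∀ j, β j ∈ M ∧ IsDiagonal M (β j)) ∧
      (∀ i j, β i * β j = β j * β i) ∧
      (∀ j, ‖β j - α j‖ ≤ ε) ∧
      WZstar M (Set.range β) ⊆ WZstar M (Set.range α) := by
  choose β hβα hβ_diag hβ_norm using fun j ↦ exists_isDiagonal_norm_sub_le (hαM j) (hα j) hε
  have h_single (j : ι) : {α j} ⊆ Set.range α := Set.singleton_subset_iff.2 ⟨j, rfl⟩
  have hβ_mem (j : ι) : β j ∈ Set.centralizer (Set.centralizer (Set.range α)) :=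
    Set.centralizer_subset (Set.centralizer_subset (h_single j)) (hβα j)
  have hα_comm : ∀ x ∈ Set.range α, ∀ y ∈ Set.range α, x * y = y * x :=
    Set.forall_mem_range.2 fun i ↦ Set.forall_mem_range.2 (hcomm i)
  refine ⟨β, fun j ↦ ⟨?_, hβ_diag j⟩, fun i j ↦ ?_, hβ_norm, ?_⟩
  · exact centralizer_centralizer_subset (Set.range_subset_iff.2 hαM) (hβ_mem j)
  · exact Set.centralizer_centralizer_comm_of_comm hα_comm _ (hβ_mem i) _ (hβ_mem j)
  · exact WZstar_subset_WZstar <| Set.range_subset_iff.2 fun j ↦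
      centralizer_centralizer_subset_WZstar (h_single j) (hβα j)

open VNA in
/-- `α` can be approximated in the uniform norm by diagonal `n`-tuples
`β` with `WZ*(β)` containing no nonzero finite projection. -/
theorem statement_15 {H : Type*} [NormedAddCommGroup H] [InnerProductSpace ℂ H]
    [CompleteSpace H] (M : VonNeumannAlgebra H)
    (hM : ProperlyInfinite M) (hσ : SigmaFinite M)
    (τ : (H →L[ℂ] H) → ENNReal) (hτ : IsFNSTrace M τ)
    (n : ℕ) (hn : 0 < n) (α : Fin n → (H →L[ℂ] H))
    (hα : IsCommutingSelfAdjointTuple M α)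
    (htriv : ∀ x ∈ WZstar M (Set.range α), IsFiniteProjection M x → x = 0)
    (ε : ℝ) (hε : 0 < ε) :
    ∃ β : Fin n → (H →L[ℂ] H),
      (∀ j, β j ∈ M ∧ IsDiagonal M (β j)) ∧
      (∀ i j, β i * β j = β j * β i) ∧
      (∀ j, ‖β j - α j‖ ≤ ε) ∧
      (∀ x ∈ WZstar M (Set.range β), IsFiniteProjection M x → x = 0) := by
  obtain ⟨hαM, hα_sa, hα_comm⟩ := hα
  obtain ⟨β, hβ, hβ_comm, hβ_norm, hWZ⟩ := statement_15_general M α hαM hα_sa hα_comm hε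
  exact ⟨β, hβ, hβ_comm, hβ_norm, fun x hx ↦ htriv x (hWZ hx)⟩
end
end
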